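/- Fix real numbers a, b, c. The cubic function V(m) = 1 + a·m + b·m² + c·m³ belongs to the class 𝒱∞ (i.e., m ↦ V(c'·m) belongs to 𝒱 for every real c') if and only if b³ ≥ 27c². -/

import Mathlib

/-!
Put `K m = m + V m / m`. For `m ≠ 0` the kernel integrates to `1` against `ν` exactly when the
Cauchy transform `G_ν` of `ν` satisfies `(K m - m) * G_ν (K m) = 1`. For the cubic `V` one has
`K m = m⁻¹ + a + B m + c m²` with `B = b + 1`, and replacing `V m` by `V (s m)` turns `(a, b, c)`
into `(a s, b s², c s³)`. So `b³ ≥ 27 c²` says that `B³ > 27 c²` for every rescaling.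

If `B³ < 27 c²` and `c ≥ 0`, then `K` is a decreasing analytic bijection from the negative reals
onto `ℝ`. With `g` its inverse, `(x - g x)⁻¹` continues `G_ν` from a neighbourhood of `-∞` to all of
`ℝ` with a single pole. By Pringsheim's theorem `ν` is then a point mass, which has variance `0`.

If `B³ > 27 c²`, the component around `0` of the region bounded by `Im K = 0` has the polar equation
`B r² + 2 c r³ cos θ = 1`. Since `K` is real on this curve and the residue theorem recovers `K⁻¹`
inside it, `K⁻¹` is the Cauchy transform `G_μ` of a probability measure `μ` given by Stieltjes
inversion. Bordering multiplication by `x` on `L²(μ)` by the constant function `1` yields a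
self-adjoint operator whose spectral measure `ν` satisfies `(z - G_μ z) * G_ν z = 1`. Its mean is
`0`, its variance is `1`, and at `z = K m` this is the equation for `ν` above.
-/

open MeasureTheory Filter

noncomputable section

/-- The Cauchy–Stieltjes kernel density `f(x,m) = V(m)/(V(m)+m(m-x))`. -/
def cskKernel (V : ℝ → ℝ) (m x : ℝ) : ℝ := V m / (V m + m * (m - x))

/-- `ν` is a non-degenerate, compactly supported probability measure on `ℝ` with mean `0`. -/
def IsCSKGenerator (ν : Measure ℝ) : Prop :=
  IsProbabilityMeasure ν ∧
  (∃ R : ℝ, ν (Set.Icc (-R) R)ᶜ = 0) ∧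
  (∀ a : ℝ, ν ≠ Measure.dirac a) ∧
  (∫ x, x ∂ν) = 0

/-- `V` is the variance function of the CSK family generated by `ν`:
`V` is real-analytic near `0`, `V 0 > 0`, and for all `m` near `0` the kernel
`f(x,m)` is a.e. nonnegative, integrates to `1`, and has mean `m`. -/
def IsCSKVarianceFun (ν : Measure ℝ) (V : ℝ → ℝ) : Prop :=
  AnalyticAt ℝ V 0 ∧ 0 < V 0 ∧
  ∃ ε > 0, ∀ m : ℝ, |m| < ε →
    (∀ᵐ x ∂ν, 0 ≤ cskKernel V m x) ∧
    (∫ x, cskKernel V m x ∂ν) = 1 ∧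
    (∫ x, x * cskKernel V m x ∂ν) = m

/-- The class `𝒱` of variance functions of CSK families generated by
non-degenerate compactly supported probability measures with mean `0` and variance `1`. -/
def memV (V : ℝ → ℝ) : Prop :=
  ∃ ν : Measure ℝ, IsCSKGenerator ν ∧ (∫ x, x ^ 2 ∂ν) = 1 ∧ IsCSKVarianceFun ν V

/-- The class `𝒱∞`: those `V` such that `m ↦ V (c * m)` is in `𝒱` for every real `c`. -/
def memVinf (V : ℝ → ℝ) : Prop := ∀ c : ℝ, memV (fun m => V (c * m))

section CauchyTransform

/-- The Cauchy transform `z ↦ ∫ (z - x)⁻¹ dμ(x)`, at real points only. It is used off the support of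
`μ`; elsewhere the integral may take the junk value `0`. -/
def cauchyTransform (μ : Measure ℝ) (z : ℝ) : ℝ := ∫ x, (z - x)⁻¹ ∂μ

lemma hasSum_pow_mul_inv_pow {z d : ℝ} (h : |z| < d) :
    HasSum (fun n : ℕ ↦ z ^ n * (d ^ (n + 1))⁻¹) (d - z)⁻¹ := by
  have hd : 0 < d := (abs_nonneg z).trans_lt h
  have hsub : d - z ≠ 0 := (sub_pos.2 ((le_abs_self z).trans_lt h)).ne'
  have hratio : |z / d| < 1 := by rwa [abs_div, abs_of_pos hd, div_lt_one hd]
  have hgeom := (hasSum_geometric_of_abs_lt_one hratio).mul_right d⁻¹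
  rw [← mul_inv, show (1 - z / d) * d = d - z by field_simp] at hgeom
  refine hgeom.congr_fun fun n ↦ ?_
  rw [div_pow, pow_succ, mul_inv, div_eq_mul_inv, mul_assoc]

lemma hasFPowerSeriesAt_cauchyTransform {ρ : Measure ℝ} [IsFiniteMeasure ρ] {T x₀ : ℝ}
    (hT : ∀ᵐ y ∂ρ, T ≤ y) (hx₀ : x₀ < T) :
    HasFPowerSeriesAt (cauchyTransform ρ)
      (.ofScalars ℝ fun n ↦ -∫ y, ((y - x₀) ^ (n + 1))⁻¹ ∂ρ) x₀ := by
  rw [hasFPowerSeriesAt_iff]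
  have hd : 0 < T - x₀ := sub_pos.2 hx₀
  filter_upwards [Metric.ball_mem_nhds 0 hd] with z hz
  replace hz : |z| < T - x₀ := by simpa using hz
  have hsum := hasSum_integral_of_dominated_convergence (μ := ρ)
    (F := fun n y ↦ z ^ n * ((y - x₀) ^ (n + 1))⁻¹) (f := fun y ↦ (y - x₀ - z)⁻¹)
    (fun n _ ↦ |z| ^ n * ((T - x₀) ^ (n + 1))⁻¹) (fun n ↦ by fun_prop)
    (fun n ↦ ?_) (.of_forall fun _ ↦ (hasSum_pow_mul_inv_pow (by rwa [abs_abs])).summable)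
    (integrable_const _) ?_
  · have hneg : cauchyTransform ρ (x₀ + z) = -∫ y, (y - x₀ - z)⁻¹ ∂ρ := by
      rw [cauchyTransform, ← integral_neg]
      congr with y
      rw [← inv_neg]
      ring
    simpa only [FormalMultilinearSeries.coeff_ofScalars, smul_eq_mul, mul_neg, hneg,
      integral_const_mul] using hsum.neg
  · filter_upwards [hT] with y hy
    have hyd : T - x₀ ≤ y - x₀ := by gcongr
    rw [norm_mul, norm_pow, Real.norm_eq_abs, norm_inv, norm_pow,
      Real.norm_of_nonneg (hd.le.trans hyd)]
    gcongr
  · filter_upwards [hT] with y hy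
    exact hasSum_pow_mul_inv_pow (hz.trans_le (by gcongr))

lemma exists_pos_forall_lt_radius_of_analyticAt {𝕜 E F : Type*} [NontriviallyNormedField 𝕜]
    [NormedAddCommGroup E] [NormedSpace 𝕜 E] [NormedAddCommGroup F] [NormedSpace 𝕜 F]
    [CompleteSpace F] {h : E → F} {x : E} (hh : AnalyticAt 𝕜 h x) :
    ∃ δ : NNReal, 0 < δ ∧ ∀ y, ‖y‖₊ < δ →
      ∃ q : FormalMultilinearSeries 𝕜 E F, HasFPowerSeriesAt h q (x + y) ∧ δ < q.radius := by
  obtain ⟨p, r, hp⟩ := hh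
  obtain ⟨δ, hδ, hδr⟩ := ENNReal.lt_iff_exists_nnreal_btwn.1 (ENNReal.half_pos hp.r_pos.ne')
  refine ⟨δ, by exact_mod_cast hδ, fun y hy ↦ ⟨p.changeOrigin y, ?_⟩⟩
  have hyδ : (‖y‖₊ : ENNReal) < δ := by exact_mod_cast hy
  have hsum : (δ : ENNReal) + ‖y‖₊ < r :=
    (ENNReal.add_lt_add hδr (hyδ.trans hδr)).trans_eq (ENNReal.add_halves r)
  have hq := hp.changeOrigin (le_add_self.trans_lt hsum)
  exact ⟨hq.hasFPowerSeriesAt, (lt_tsub_iff_right.2 hsum).trans_le hq.r_le⟩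

lemma ae_add_le_of_integral_inv_pow_mul_pow_le {ρ : Measure ℝ} [IsFiniteMeasure ρ]
    {T x₀ s s' C : ℝ} (hT : ∀ᵐ y ∂ρ, T ≤ y) (hx₀ : x₀ < T) (hs' : 0 < s') (hs : s' < s)
    (hC : ∀ n : ℕ, (∫ y, ((y - x₀) ^ (n + 1))⁻¹ ∂ρ) * s ^ n ≤ C) :
    ∀ᵐ y ∂ρ, x₀ + s' ≤ y := by
  have hpos : ∀ᵐ y ∂ρ, 0 < y - x₀ := hT.mono fun y hy ↦ sub_pos.2 (hx₀.trans_le hy)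
  have markov (n : ℕ) : (s / s') ^ n * (s'⁻¹ * ρ.real {y | y < x₀ + s'}) ≤ C := by
    have hint : Integrable (fun y ↦ ((y - x₀) ^ (n + 1))⁻¹) ρ := by
      refine .of_bound (C := ((T - x₀) ^ (n + 1))⁻¹) (by fun_prop) ?_
      filter_upwards [hT, hpos] with y hy hy0
      have : 0 < T - x₀ := sub_pos.2 hx₀
      rw [Real.norm_of_nonneg (by positivity)]
      gcongr
    have hle : ρ.real {y | y < x₀ + s'} ≤
        ρ.real {y | (s' ^ (n + 1))⁻¹ ≤ ((y - x₀) ^ (n + 1))⁻¹} := by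
      refine ENNReal.toReal_mono (measure_ne_top _ _) (measure_mono_ae ?_)
      filter_upwards [hpos] with y hy hys
      change (s' ^ (n + 1))⁻¹ ≤ ((y - x₀) ^ (n + 1))⁻¹
      gcongr
      linarith [show y < x₀ + s' from hys]
    have hmarkov := mul_meas_ge_le_integral_of_nonneg
      (hpos.mono fun y hy ↦ by positivity) hint (s' ^ (n + 1))⁻¹
    calc (s / s') ^ n * (s'⁻¹ * ρ.real {y | y < x₀ + s'})
        = (s' ^ (n + 1))⁻¹ * ρ.real {y | y < x₀ + s'} * s ^ n := by
          rw [div_pow, pow_succ]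
          field_simp
      _ ≤ (∫ y, ((y - x₀) ^ (n + 1))⁻¹ ∂ρ) * s ^ n := by
        have : 0 < s := hs'.trans hs
        gcongr
        exact (by gcongr : _ ≤ _).trans hmarkov
      _ ≤ C := hC n
  have hnull : ρ.real {y | y < x₀ + s'} = 0 := by
    by_contra hne
    have hmass : 0 < s'⁻¹ * ρ.real {y | y < x₀ + s'} :=
      mul_pos (inv_pos.2 hs') (measureReal_nonneg.lt_of_ne' hne)
    obtain ⟨n, hn⟩ := pow_unbounded_of_one_lt (C / (s'⁻¹ * ρ.real {y | y < x₀ + s'}))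
      ((one_lt_div hs').2 hs)
    exact ((div_lt_iff₀ hmass).1 hn).not_ge (markov n)
  rw [ae_iff]
  simpa only [not_le] using (measureReal_eq_zero_iff).1 hnull

/- This is Pringsheim's theorem: a power series with nonnegative coefficients is singular at the
positive endpoint of its interval of convergence. Here the Taylor coefficients of
`-cauchyTransform ρ` at points to the left of the support are nonnegative. -/
lemma exists_gt_ae_le_of_analyticAt {ρ : Measure ℝ} [IsFiniteMeasure ρ] {h : ℝ → ℝ} {T : ℝ}
    (hT : ∀ᵐ y ∂ρ, T ≤ y) (hh : AnalyticAt ℝ h T)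
    (heq : Set.EqOn (cauchyTransform ρ) h (Set.Iio T)) : ∃ T' > T, ∀ᵐ y ∂ρ, T' ≤ y := by
  obtain ⟨δ, hδ, hrad⟩ := exists_pos_forall_lt_radius_of_analyticAt hh
  have hδ' : (0 : ℝ) < δ := hδ
  have hx₀ : T + -(δ / 2 : ℝ) < T := by linarith
  obtain ⟨q, hq, hδq⟩ := hrad (-(δ / 2 : ℝ)) (by
    rw [← NNReal.coe_lt_coe, coe_nnnorm, norm_neg, Real.norm_of_nonneg (by positivity)]
    exact half_lt_self hδ')
  have hq_eq := hq.eq_formalMultilinearSeries_of_eventually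
    (hasFPowerSeriesAt_cauchyTransform hT hx₀)
    (heq.symm.eventuallyEq_of_mem (Iio_mem_nhds hx₀))
  obtain ⟨C, -, hC⟩ := q.norm_mul_pow_le_of_lt_radius hδq
  refine ⟨T + -(δ / 2 : ℝ) + 3 / 4 * δ, by linarith,
    ae_add_le_of_integral_inv_pow_mul_pow_le (s := δ) (C := C) hT hx₀ (by positivity)
      (by linarith) fun n ↦ ?_⟩
  refine le_trans ?_ (hC n)
  rw [hq_eq, FormalMultilinearSeries.ofScalars_norm, norm_neg]
  gcongr
  exact Real.le_norm_self _

theorem eq_zero_of_cauchyTransform_eqOn_analytic {ρ : Measure ℝ} [IsFiniteMeasure ρ] {T N : ℝ}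
    {h : ℝ → ℝ} (hT : ∀ᵐ y ∂ρ, T ≤ y) (hh : ∀ x, AnalyticAt ℝ h x)
    (heq : Set.EqOn (cauchyTransform ρ) h (Set.Iio N)) : ρ = 0 := by
  let S : Set ℝ := {t | ∀ᵐ y ∂ρ, t ≤ y}
  have hclosed : IsClosed S := IsSeqClosed.isClosed fun t t₀ ht hlim ↦
    (ae_all_iff.2 ht).mono fun y hy ↦ le_of_tendsto' hlim hy
  have hopen : IsOpen S := by
    refine isOpen_iff_mem_nhds.2 fun t ht ↦ ?_
    have heq_t : Set.EqOn (cauchyTransform ρ) h (Set.Iio t) := by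
      refine AnalyticOnNhd.eqOn_of_preconnected_of_eventuallyEq (z₀ := min N t - 1)
        (fun x hx ↦ (hasFPowerSeriesAt_cauchyTransform ht hx).analyticAt) (fun x _ ↦ hh x)
        isPreconnected_Iio ?_ (heq.eventuallyEq_of_mem (Iio_mem_nhds ?_))
      · exact (sub_one_lt _).trans_le (min_le_right N t)
      · exact (sub_one_lt _).trans_le (min_le_left N t)
    obtain ⟨t', htt', ht'⟩ := exists_gt_ae_le_of_analyticAt ht (hh t) heq_t
    filter_upwards [Iio_mem_nhds htt'] with u hu
    exact ht'.mono fun y hy ↦ hu.le.trans hy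
  have huniv : S = Set.univ := IsClopen.eq_univ ⟨hclosed, hopen⟩ ⟨T, hT⟩
  have hall : ∀ᵐ y ∂ρ, ∀ n : ℕ, (n : ℝ) ≤ y :=
    ae_all_iff.2 fun n ↦ huniv.symm.subset (Set.mem_univ (n : ℝ))
  rw [← ae_eq_bot, ← Filter.eventually_false_iff_eq_bot]
  filter_upwards [hall] with y hy
  obtain ⟨n, hn⟩ := exists_nat_gt y
  exact hn.not_ge (hy n)

lemma integrable_of_ae_abs_le {E : Type*} [NormedAddCommGroup E] {μ : Measure ℝ}
    [IsFiniteMeasure μ] {R : ℝ} {f : ℝ → E} (hR : ∀ᵐ x ∂μ, |x| ≤ R)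
    (hf : ContinuousOn f (Set.Icc (-R) R)) : Integrable f μ := by
  rw [← Measure.restrict_eq_self_of_ae_mem (hR.mono fun x ↦ abs_le.1)]
  exact hf.integrableOn_compact isCompact_Icc

lemma memLp_inv_sub {μ : Measure ℝ} [IsFiniteMeasure μ] {R z : ℝ} (hR : ∀ᵐ x ∂μ, |x| ≤ R)
    (hz : R < |z|) (p : ENNReal) : MemLp (fun x ↦ (z - x)⁻¹) p μ := by
  refine .of_bound (by fun_prop) (|z| - R)⁻¹ (hR.mono fun x hx ↦ ?_)
  have : 0 < |z| - R := sub_pos.2 hz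
  rw [norm_inv, Real.norm_eq_abs]
  gcongr
  linarith [abs_sub_abs_le_abs_sub z x]

lemma cauchyTransform_withDensity_sq_sub {ν : Measure ℝ} [IsFiniteMeasure ν] {R z : ℝ}
    (hR : ∀ᵐ y ∂ν, |y| ≤ R) (hz : R < |z|) (t : ℝ) :
    cauchyTransform (ν.withDensity fun y ↦ ENNReal.ofReal ((y - t) ^ 2)) z =
      (z - t) ^ 2 * cauchyTransform ν z - ((z - 2 * t) * ν.real Set.univ + ∫ y, y ∂ν) := by
  rw [cauchyTransform, integral_withDensity_eq_integral_toReal_smul (by fun_prop) (by simp)]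
  have hint : Integrable (fun y : ℝ ↦ y) ν := integrable_of_ae_abs_le hR continuousOn_id
  have hint_add : Integrable (fun y ↦ z - 2 * t + y) ν := (integrable_const _).add hint
  calc ∫ y, (ENNReal.ofReal ((y - t) ^ 2)).toReal • (z - y)⁻¹ ∂ν
      = ∫ y, (z - t) ^ 2 * (z - y)⁻¹ - (z - 2 * t + y) ∂ν := by
        refine integral_congr_ae (hR.mono fun y hy ↦ ?_)
        have hzy : z - y ≠ 0 := sub_ne_zero.2 fun h ↦ hz.not_ge (h ▸ hy)
        dsimp only
        rw [ENNReal.toReal_ofReal (sq_nonneg _), smul_eq_mul]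
        field_simp
        ring
    _ = _ := by
        rw [integral_sub (((memLp_inv_sub hR hz 1).integrable le_rfl).const_mul _) hint_add,
          integral_const_mul, integral_add (integrable_const _) hint, integral_const, smul_eq_mul,
          mul_comm (ν.real _), cauchyTransform]

lemma analyticAt_dslope {𝕜 E : Type*} [NontriviallyNormedField 𝕜] [NormedAddCommGroup E]
    [NormedSpace 𝕜 E] {f : 𝕜 → E} {a x : 𝕜} (ha : AnalyticAt 𝕜 f a) (hx : AnalyticAt 𝕜 f x) :
    AnalyticAt 𝕜 (dslope f a) x := by
  rcases eq_or_ne x a with rfl | hne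
  · obtain ⟨p, hp⟩ := ha
    exact hp.has_fpower_series_dslope_fslope.analyticAt
  · refine AnalyticAt.congr ?_ (dslope_eventuallyEq_slope_of_ne f hne).symm
    exact ((analyticAt_id.sub analyticAt_const).inv (sub_ne_zero.2 hne)).smul
      (hx.sub analyticAt_const)

lemma dslope_nonpos_of_antitone {g : ℝ → ℝ} (hg : Antitone g) (a x : ℝ) : dslope g a x ≤ 0 := by
  rcases eq_or_ne x a with rfl | hne
  · rw [dslope_same]
    exact hg.deriv_nonpos
  · rw [dslope_of_ne _ hne]
    exact (hg.antitoneOn Set.univ).slope_nonpos (Set.mem_univ a) (Set.mem_univ x)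

lemma exists_isFixedPt_of_antitone {g : ℝ → ℝ} (hg : Antitone g) (hcont : Continuous g) :
    ∃ t, g t = t := by
  obtain ⟨t, ht⟩ := mem_range_of_exists_le_of_exists_ge (continuous_id.sub hcont) (c := 0)
    ⟨min 0 (g 0), sub_nonpos.2 ((min_le_right _ _).trans (hg (min_le_left _ _)))⟩
    ⟨max 0 (g 0), sub_nonneg.2 ((hg (le_max_left _ _)).trans (le_max_right _ _))⟩
  exact ⟨t, (sub_eq_zero.1 ht).symm⟩

/- Weighting `ν` by `(y - t) ^ 2`, with `t` the fixed point of `g`, cancels the only pole of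
`(x - g x)⁻¹`. -/
theorem exists_ae_eq_of_cauchyTransform_eq_inv_sub {ν : Measure ℝ} [IsFiniteMeasure ν] {R N : ℝ}
    {g : ℝ → ℝ} (hR : ∀ᵐ y ∂ν, |y| ≤ R) (hg : ∀ x, AnalyticAt ℝ g x) (hanti : Antitone g)
    (heq : ∀ x < N, cauchyTransform ν x = (x - g x)⁻¹) : ∃ t, ∀ᵐ y ∂ν, y = t := by
  obtain ⟨t, ht⟩ := exists_isFixedPt_of_antitone hanti
    (continuous_iff_continuousAt.2 fun x ↦ (hg x).continuousAt)
  have hfac (x : ℝ) : x - g x = (x - t) * (1 - dslope g t x) := by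
    linear_combination sub_smul_dslope g t x - ht
  have hfac_ne (x : ℝ) : 1 - dslope g t x ≠ 0 := by
    linarith [dslope_nonpos_of_antitone hanti t x]
  refine ⟨t, ?_⟩
  have hint : Integrable (fun y ↦ (y - t) ^ 2) ν := integrable_of_ae_abs_le hR (by fun_prop)
  have : IsFiniteMeasure (ν.withDensity fun y ↦ ENNReal.ofReal ((y - t) ^ 2)) :=
    isFiniteMeasure_withDensity_ofReal hint.2
  have hzero : ν.withDensity (fun y ↦ ENNReal.ofReal ((y - t) ^ 2)) = 0 := by
    refine eq_zero_of_cauchyTransform_eqOn_analytic (T := -R) (N := min N (-R))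
      (h := fun x ↦ (x - t) / (1 - dslope g t x) -
        ((x - 2 * t) * ν.real Set.univ + ∫ y, y ∂ν))
      ((withDensity_absolutelyContinuous _ _).ae_le (hR.mono fun y hy ↦ (abs_le.1 hy).1))
      (fun x ↦ ?_) fun x (hx : x < min N (-R)) ↦ ?_
    · have hk : AnalyticAt ℝ (dslope g t) x := analyticAt_dslope (hg t) (hg x)
      have hk_ne := hfac_ne x
      fun_prop (disch := assumption)
    · have hxR : R < |x| := by
        linarith [neg_le_abs x, hx.trans_le (min_le_right _ _)]
      rw [cauchyTransform_withDensity_sq_sub hR hxR, heq x (hx.trans_le (min_le_left _ _)), hfac,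
        mul_inv, ← mul_assoc]
      dsimp only
      rw [div_eq_mul_inv]
      congr 2
      rcases eq_or_ne x t with rfl | hne
      · simp
      · field_simp [sub_ne_zero.2 hne]
  filter_upwards [(withDensity_eq_zero_iff (by fun_prop)).1 hzero] with y hy
  have hsq : (y - t) ^ 2 ≤ 0 := ENNReal.ofReal_eq_zero.1 hy
  exact sub_eq_zero.1 (pow_eq_zero_iff two_ne_zero |>.1 (hsq.antisymm (sq_nonneg _)))

end CauchyTransform

section FunctionalInverse

lemma exists_analytic_inverse_of_deriv_neg {f : ℝ → ℝ} {s : Set ℝ} (hs : IsOpen s)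
    (hconv : Convex ℝ s) (hf : ∀ m ∈ s, AnalyticAt ℝ f m) (hderiv : ∀ m ∈ s, deriv f m < 0)
    (hsurj : Set.SurjOn f s Set.univ) :
    ∃ g : ℝ → ℝ, (∀ x, g x ∈ s) ∧ Function.RightInverse g f ∧ Set.LeftInvOn g f s ∧
      (∀ x, AnalyticAt ℝ g x) ∧ Antitone g := by
  have hanti : StrictAntiOn f s := strictAntiOn_of_deriv_neg hconv
    (fun m hm ↦ (hf m hm).continuousAt.continuousWithinAt)
    fun m hm ↦ hderiv m (interior_subset hm)
  choose g hgs hfg using fun x ↦ hsurj (Set.mem_univ x)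
  have hgf : Set.LeftInvOn g f s := fun m hm ↦ hanti.injOn (hgs _) hm (hfg _)
  refine ⟨g, hgs, hfg, hgf, fun x ↦ ?_, fun x y hxy ↦ ?_⟩
  · have hcomp : AnalyticAt ℝ (g ∘ f) (g x) := analyticAt_id.congr <|
      hgf.eqOn.symm.eventuallyEq_of_mem (hs.mem_nhds (hgs x))
    rw [← hfg x]
    exact (analyticAt_comp_iff_of_deriv_ne_zero (hf _ (hgs x)) (hderiv _ (hgs x)).ne).1 hcomp
  · by_contra! hlt
    exact (hanti (hgs x) (hgs y) hlt).not_ge (by rwa [hfg, hfg])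

/-- The functional inverse `m ↦ m + V m / m` of the mean map of the CSK family with variance
function `V`: the kernel `cskKernel V m` has its pole at `x = cskInverse V m`. -/
def cskInverse (V : ℝ → ℝ) (m : ℝ) : ℝ := m + V m / m

lemma add_mul_sub_eq_mul_cskInverse_sub (V : ℝ → ℝ) {m : ℝ} (hm : m ≠ 0) (x : ℝ) :
    V m + m * (m - x) = m * (cskInverse V m - x) := by
  rw [cskInverse]
  field_simp
  ring

lemma cskKernel_eq_mul_inv_sub (V : ℝ → ℝ) {m : ℝ} (hm : m ≠ 0) (x : ℝ) :
    cskKernel V m x = V m / m * (cskInverse V m - x)⁻¹ := by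
  rw [cskKernel, add_mul_sub_eq_mul_cskInverse_sub V hm, div_mul_eq_div_div, div_eq_mul_inv]

lemma integral_cskKernel (V : ℝ → ℝ) {m : ℝ} (hm : m ≠ 0) (ν : Measure ℝ) :
    ∫ x, cskKernel V m x ∂ν = V m / m * cauchyTransform ν (cskInverse V m) := by
  simp only [cskKernel_eq_mul_inv_sub V hm, integral_const_mul, cauchyTransform]

lemma measure_compl_Icc_eq_zero_iff {μ : Measure ℝ} {R : ℝ} :
    μ (Set.Icc (-R) R)ᶜ = 0 ↔ ∀ᵐ x ∂μ, |x| ≤ R := by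
  simp only [ae_iff, abs_le, Set.compl_def, Set.mem_Icc]

lemma eq_dirac_of_ae_eq {α : Type*} [MeasurableSpace α] {μ : Measure α} [IsProbabilityMeasure μ]
    {t : α} (h : ∀ᵐ y ∂μ, y = t) : μ = Measure.dirac t := by
  rw [← Measure.map_id' (μ := μ), Measure.map_congr (g := fun _ ↦ t) h, Measure.map_const,
    measure_univ, one_smul]

/- If `g` inverts `cskInverse V` on the whole real line, the Cauchy transform of the generator is
`x ↦ (x - g x)⁻¹`, whose only real pole is the fixed point of `g`: the generator is degenerate. -/
theorem not_memV_of_deriv_neg {V : ℝ → ℝ} (hV : ∀ m < 0, AnalyticAt ℝ (cskInverse V) m)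
    (hderiv : ∀ m < 0, deriv (cskInverse V) m < 0)
    (hsurj : Set.SurjOn (cskInverse V) (Set.Iio 0) Set.univ) : ¬ memV V := by
  rintro ⟨ν, ⟨hprob, ⟨R, hR⟩, hdirac, -⟩, -, -, -, ε, hε, hker⟩
  obtain ⟨g, hg_neg, hfg, hgf, hg, hanti⟩ :=
    exists_analytic_inverse_of_deriv_neg isOpen_Iio (convex_Iio 0) hV hderiv hsurj
  obtain ⟨t, ht⟩ := exists_ae_eq_of_cauchyTransform_eq_inv_sub
    (N := cskInverse V (-(ε / 2))) (measure_compl_Icc_eq_zero_iff.1 hR) hg hanti fun x hx ↦ by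
      have hneg : g x < 0 := hg_neg x
      have hle : -(ε / 2) ≤ g x := by
        rw [← hgf (show -(ε / 2) ∈ Set.Iio 0 from neg_neg_iff_pos.2 (half_pos hε))]
        exact hanti hx.le
      have hmass := (hker (g x) (by rw [abs_of_neg hneg]; linarith)).2.1
      rw [integral_cskKernel V hneg.ne, hfg] at hmass
      have hpole : V (g x) / g x = x - g x := eq_sub_of_add_eq' (hfg x)
      rw [← hpole]
      exact eq_inv_of_mul_eq_one_right hmass
  exact hdirac t (eq_dirac_of_ae_eq ht)

end FunctionalInverse

section CubicVariance

/-- The cubic variance function `V(m) = 1 + a m + b m² + c m³`. -/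
def cubicVariance (a b c m : ℝ) : ℝ := 1 + a * m + b * m ^ 2 + c * m ^ 3

/-- The cubic analogue `K(m) = m⁻¹ + a + B m + c m²` of a functional inverse of a Cauchy transform.
It makes sense over any field since it is used at real and at complex points. -/
def cubicInverse {𝕜 : Type*} [Field 𝕜] (a B c m : 𝕜) : 𝕜 := m⁻¹ + a + B * m + c * m ^ 2

lemma cskInverse_cubicVariance {a b c m : ℝ} (hm : m ≠ 0) :
    cskInverse (cubicVariance a b c) m = cubicInverse a (b + 1) c m := by
  rw [cskInverse, cubicVariance, cubicInverse]
  field_simp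
  ring

lemma hasDerivAt_cubicInverse {𝕜 : Type*} [NontriviallyNormedField 𝕜] {a B c m : 𝕜} (hm : m ≠ 0) :
    HasDerivAt (cubicInverse a B c) (-(m ^ 2)⁻¹ + B + 2 * c * m) m := by
  refine ((((hasDerivAt_inv hm).add_const a).add ((hasDerivAt_id m).const_mul B)).add
    ((hasDerivAt_pow 2 m).const_mul c)).congr_deriv ?_
  push_cast
  ring

lemma analyticAt_cubicInverse {𝕜 : Type*} [NontriviallyNormedField 𝕜] {a B c m : 𝕜} (hm : m ≠ 0) :
    AnalyticAt 𝕜 (cubicInverse a B c) m := by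
  unfold cubicInverse
  fun_prop (disch := assumption)

lemma deriv_cubicInverse_neg {a B c m : ℝ} (hc : 0 ≤ c) (hB : B ^ 3 < 27 * c ^ 2) (hm : m < 0) :
    deriv (cubicInverse a B c) m < 0 := by
  have hc' : 0 ≤ c * -m := mul_nonneg hc (neg_nonneg.2 hm.le)
  have hlt : B * m ^ 2 + 2 * c * m ^ 3 < 1 := by
    rcases le_or_gt B 0 with hB0 | hB0
    · nlinarith [mul_nonneg (neg_nonneg.2 hB0) (sq_nonneg m), mul_nonneg hc' (sq_nonneg m)]
    · have hmax : 27 * c ^ 2 * (B * m ^ 2 + 2 * c * m ^ 3) ≤ B ^ 3 := by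
        have := mul_nonneg (sq_nonneg (3 * (c * -m) - B)) (show 0 ≤ 6 * (c * -m) + B by linarith)
        linear_combination this
      by_contra! hge
      nlinarith [mul_le_mul_of_nonneg_left hge (show 0 ≤ 27 * c ^ 2 by positivity)]
  have hfac : -(m ^ 2)⁻¹ + B + 2 * c * m = (B * m ^ 2 + 2 * c * m ^ 3 - 1) / m ^ 2 := by
    field_simp [hm.ne]
    ring
  rw [(hasDerivAt_cubicInverse hm.ne).deriv, hfac]
  exact div_neg_of_neg_of_pos (sub_neg.2 hlt) (sq_pos_of_neg hm)

lemma tendsto_cubicInverse_atBot {a B c : ℝ} (hc : 0 ≤ c) (hB : B ^ 3 < 27 * c ^ 2) :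
    Tendsto (cubicInverse a B c) atBot atTop := by
  have hpoly : Tendsto (fun m ↦ m * (B + c * m)) atBot atTop := by
    rcases hc.lt_or_eq with hc | rfl
    · exact tendsto_id.atBot_mul_atBot₀
        (tendsto_atBot_add_const_left _ B (tendsto_id.const_mul_atBot hc))
    · have hB0 : B < 0 := Odd.pow_neg_iff (by decide) |>.1 (hB.trans_eq (by norm_num))
      simpa only [zero_mul, add_zero, id] using tendsto_id.atBot_mul_const_of_neg hB0
  refine ((tendsto_inv_atBot_zero.add_const a).add_atTop hpoly).congr fun m ↦ ?_
  rw [cubicInverse]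
  ring

lemma tendsto_cubicInverse_nhdsLT_zero {a B c : ℝ} :
    Tendsto (cubicInverse a B c) (nhdsWithin 0 (Set.Iio 0)) atBot := by
  have hpoly : Tendsto (fun m ↦ a + B * m + c * m ^ 2) (nhdsWithin 0 (Set.Iio 0))
      (nhds (a + B * 0 + c * 0 ^ 2)) :=
    (Continuous.tendsto (by fun_prop) 0).mono_left nhdsWithin_le_nhds
  refine (tendsto_inv_nhdsLT_zero.atBot_add hpoly).congr fun m ↦ ?_
  rw [cubicInverse]
  ring

lemma surjOn_cubicInverse {a B c : ℝ} (hc : 0 ≤ c) (hB : B ^ 3 < 27 * c ^ 2) :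
    Set.SurjOn (cubicInverse a B c) (Set.Iio 0) Set.univ :=
  ContinuousOn.surjOn_of_tendsto' ⟨-1, neg_one_lt_zero (R := ℝ)⟩
    (fun _ hm ↦ (analyticAt_cubicInverse (ne_of_lt hm)).continuousAt.continuousWithinAt)
    (tendsto_comp_val_Iio_atBot.2 (tendsto_cubicInverse_atBot hc hB))
    ((tendsto_comp_coe_Iio_atTop).2 tendsto_cubicInverse_nhdsLT_zero)

theorem not_memV_cubicVariance {a b c : ℝ} (hc : 0 ≤ c) (hb : (b + 1) ^ 3 < 27 * c ^ 2) :
    ¬ memV (cubicVariance a b c) := by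
  have heq : Set.EqOn (cskInverse (cubicVariance a b c)) (cubicInverse a (b + 1) c) (Set.Iio 0) :=
    fun m hm ↦ cskInverse_cubicVariance (ne_of_lt hm)
  have heq_near (m : ℝ) (hm : m < 0) :
      cskInverse (cubicVariance a b c) =ᶠ[nhds m] cubicInverse a (b + 1) c :=
    heq.eventuallyEq_of_mem (Iio_mem_nhds hm)
  refine not_memV_of_deriv_neg (fun m hm ↦ ?_) (fun m hm ↦ ?_) ?_
  · exact (analyticAt_cubicInverse hm.ne).congr (heq_near m hm).symm
  · rw [(heq_near m hm).deriv_eq]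
    exact deriv_cubicInverse_neg hc hb hm
  · exact heq.surjOn_iff.2 (surjOn_cubicInverse hc hb)

end CubicVariance

section SpectralMeasure

open scoped InnerProductSpace CompactlySupported

lemma smul_resolvent_sub {E : Type*} [NormedAddCommGroup E] [NormedSpace ℂ E] {T : E →L[ℂ] E}
    {z : ℝ} (hz : z ∈ resolventSet ℝ T) (e : E) :
    (z : ℂ) • resolvent T z e - T (resolvent T z e) = e := by
  have hmul : (algebraMap ℝ (E →L[ℂ] E) z - T) * resolvent T z = 1 := Ring.mul_inverse_cancel _ hz
  simpa [Algebra.algebraMap_eq_smul_one] using congrArg (· e) hmul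

variable {H : Type*} [NormedAddCommGroup H] [InnerProductSpace ℂ H] [CompleteSpace H]
  {T : H →L[ℂ] H}

/-- The positive functional `f ↦ ⟪e, f(T) e⟫` on the continuous functions on the spectrum of a
self-adjoint operator `T`. -/
def spectralFunctional (hT : IsSelfAdjoint T) (e : H) : C_c(spectrum ℝ T, ℝ) →ₚ[ℝ] ℝ :=
  PositiveLinearMap.mk₀
    { toFun := fun f ↦ (⟪e, cfcHom hT (f : C(spectrum ℝ T, ℝ)) e⟫_ℂ).re
      map_add' := fun f g ↦ by
        have hfg : ((f + g : C_c(spectrum ℝ T, ℝ)) : C(spectrum ℝ T, ℝ)) = f + g := rfl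
        simp [hfg]
      map_smul' := fun r f ↦ by
        have hrf : ((r • f : C_c(spectrum ℝ T, ℝ)) : C(spectrum ℝ T, ℝ)) = r • ↑f := rfl
        simp [hrf, inner_smul_right_eq_smul] }
    fun f hf ↦ by
      have hpos : 0 ≤ cfcHom hT (f : C(spectrum ℝ T, ℝ)) := (cfcHom_nonneg_iff hT).2 hf
      exact ((ContinuousLinearMap.nonneg_iff_isPositive _).1 hpos).re_inner_nonneg_right e

/-- The spectral measure of a self-adjoint operator `T` at the vector `e`, as a measure on `ℝ`. -/
def spectralMeasure (hT : IsSelfAdjoint T) (e : H) : Measure ℝ :=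
  (RealRMK.rieszMeasure (spectralFunctional hT e)).map Subtype.val

instance (hT : IsSelfAdjoint T) (e : H) : IsFiniteMeasure (spectralMeasure hT e) := by
  unfold spectralMeasure
  infer_instance

lemma integral_spectralMeasure (hT : IsSelfAdjoint T) (e : H) {f : ℝ → ℝ}
    (hf : ContinuousOn f (spectrum ℝ T)) :
    ∫ x, f x ∂spectralMeasure hT e = (⟪e, cfc f T e⟫_ℂ).re := by
  rw [spectralMeasure,
    (MeasurableEmbedding.subtype_coe (spectrum.isCompact T).measurableSet).integral_map,
    cfc_apply f T hT hf]
  exact RealRMK.integral_rieszMeasure (spectralFunctional hT e)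
    (CompactlySupportedContinuousMap.continuousMapEquiv ⟨_, hf.domRestrict⟩)

lemma ae_mem_spectrum_spectralMeasure (hT : IsSelfAdjoint T) (e : H) :
    ∀ᵐ x ∂spectralMeasure hT e, x ∈ spectrum ℝ T :=
  (ae_map_iff measurable_subtype_coe.aemeasurable (spectrum.isCompact T).measurableSet).2
    (.of_forall Subtype.property)

lemma ae_abs_le_spectralMeasure (hT : IsSelfAdjoint T) (e : H) :
    ∀ᵐ x ∂spectralMeasure hT e, |x| ≤ ‖T‖ * ‖(1 : H →L[ℂ] H)‖ :=
  (ae_mem_spectrum_spectralMeasure hT e).mono fun _ hx ↦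
    mem_closedBall_zero_iff.1 (spectrum.subset_closedBall_norm_mul T hx)

lemma isProbabilityMeasure_spectralMeasure (hT : IsSelfAdjoint T) {e : H} (he : ‖e‖ = 1) :
    IsProbabilityMeasure (spectralMeasure hT e) := by
  have hmass := integral_spectralMeasure hT e (f := fun _ ↦ 1) (by fun_prop)
  rw [cfc_const_one ℝ T, one_apply_eq_self, inner_self_eq_norm_sq_to_K, he,
    integral_const] at hmass
  exact isProbabilityMeasure_iff_real.2 (by simpa using hmass)

lemma integral_id_spectralMeasure (hT : IsSelfAdjoint T) (e : H) :
    ∫ x, x ∂spectralMeasure hT e = (⟪e, T e⟫_ℂ).re := by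
  rw [integral_spectralMeasure hT e (f := fun x ↦ x) (by fun_prop), cfc_id' ℝ T]

lemma integral_sq_spectralMeasure (hT : IsSelfAdjoint T) (e : H) :
    ∫ x, x ^ 2 ∂spectralMeasure hT e = (⟪e, T (T e)⟫_ℂ).re := by
  rw [integral_spectralMeasure hT e (f := fun x ↦ x ^ 2) (by fun_prop), cfc_pow_id (R := ℝ) T 2,
    pow_two, mul_apply_eq_comp]

lemma cauchyTransform_spectralMeasure (hT : IsSelfAdjoint T) (e : H) {z : ℝ}
    (hz : z ∈ resolventSet ℝ T) :
    cauchyTransform (spectralMeasure hT e) z = (⟪e, resolvent T z e⟫_ℂ).re := by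
  have hne (x : ℝ) (hx : x ∈ spectrum ℝ T) : z - x ≠ 0 := by
    rw [sub_ne_zero]
    rintro rfl
    exact hx hz
  rw [cauchyTransform, integral_spectralMeasure hT e (f := fun x ↦ (z - x)⁻¹)
      (ContinuousOn.inv₀ (by fun_prop) hne),
    cfc_inv (fun x ↦ z - x) T hne, cfc_sub (fun _ ↦ z) (fun x ↦ x) T,
    cfc_const z T, cfc_id' ℝ T, resolvent]

lemma mem_resolventSet_of_norm_lt_abs {z : ℝ} (hz : ‖T‖ * ‖(1 : H →L[ℂ] H)‖ < |z|) :
    z ∈ resolventSet ℝ T :=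
  spectrum.mem_resolventSet_of_norm_lt_mul hz

end SpectralMeasure

section BorderedOperator

open scoped InnerProductSpace ENNReal

variable {𝕜 H : Type*} [RCLike 𝕜] [NormedAddCommGroup H] [InnerProductSpace 𝕜 H]

/-- The operator on `𝕜 ⊕ H` with block matrix `[[0, ⟪ξ, ·⟫], [ξ, A]]`. -/
def borderedMap (A : H →ₗ[𝕜] H) (ξ : H) : WithLp 2 (𝕜 × H) →ₗ[𝕜] WithLp 2 (𝕜 × H) where
  toFun p := WithLp.toLp 2 (⟪ξ, p.snd⟫_𝕜, p.fst • ξ + A p.snd)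
  map_add' p q := by
    refine WithLp.ofLp_injective 2 (Prod.ext ?_ ?_)
    · simp [inner_add_right]
    · simp [add_smul]
      abel
  map_smul' s p := by
    refine WithLp.ofLp_injective 2 (Prod.ext ?_ ?_)
    · simp [inner_smul_right]
    · simp [mul_smul]

lemma borderedMap_apply (A : H →ₗ[𝕜] H) (ξ : H) (p : WithLp 2 (𝕜 × H)) :
    borderedMap A ξ p = WithLp.toLp 2 (⟪ξ, p.snd⟫_𝕜, p.fst • ξ + A p.snd) := rfl

lemma isSymmetric_borderedMap {A : H →ₗ[𝕜] H} (hA : A.IsSymmetric) (ξ : H) :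
    (borderedMap A ξ).IsSymmetric := fun p q ↦
  calc ⟪borderedMap A ξ p, q⟫_𝕜
      = ⟪⟪ξ, p.snd⟫_𝕜, q.fst⟫_𝕜 + ⟪p.fst • ξ + A p.snd, q.snd⟫_𝕜 := WithLp.prod_inner_apply _ _
    _ = ⟪p.fst, ⟪ξ, q.snd⟫_𝕜⟫_𝕜 + ⟪p.snd, q.fst • ξ + A q.snd⟫_𝕜 := by
      simp only [inner_add_left, inner_add_right, inner_smul_left, inner_smul_right,
        RCLike.inner_apply, inner_conj_symm, hA p.snd q.snd]
      ring
    _ = ⟪p, borderedMap A ξ q⟫_𝕜 := (WithLp.prod_inner_apply p (borderedMap A ξ q)).symm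

lemma sub_inner_mul_fst_eq_one {A : H →ₗ[𝕜] H} (hA : A.IsSymmetric) {ξ h : H}
    {p : WithLp 2 (𝕜 × H)} {z : ℝ} (hh : (z : 𝕜) • h - A h = ξ)
    (hp : (z : 𝕜) • p - borderedMap A ξ p = WithLp.toLp 2 (1, 0)) :
    ((z : 𝕜) - ⟪h, ξ⟫_𝕜) * p.fst = 1 := by
  have hfst : (z : 𝕜) * p.fst - ⟪ξ, p.snd⟫_𝕜 = 1 := congrArg WithLp.fst hp
  have hsnd : (z : 𝕜) • p.snd - (p.fst • ξ + A p.snd) = 0 := congrArg WithLp.snd hp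
  have hinner : ⟪ξ, p.snd⟫_𝕜 = p.fst * ⟪h, ξ⟫_𝕜 :=
    calc ⟪ξ, p.snd⟫_𝕜 = ⟪h, (z : 𝕜) • p.snd - A p.snd⟫_𝕜 := by
          rw [← hh, inner_sub_left, inner_sub_right, hA h p.snd, inner_smul_left,
            inner_smul_right, RCLike.conj_ofReal]
      _ = p.fst * ⟪h, ξ⟫_𝕜 := by
          rw [← inner_smul_right, sub_eq_iff_eq_add.2 (sub_eq_zero.1 hsnd)]
  linear_combination hfst + hinner

lemma isSymmetric_holderL_mul {α : Type*} [MeasurableSpace α] {μ : Measure α} {φ : Lp ℂ ∞ μ}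
    (hφ : ∀ᵐ x ∂μ, starRingEnd ℂ (φ x) = φ x) :
    ((ContinuousLinearMap.mul ℂ ℂ).holderL μ ∞ 2 2 φ : Lp ℂ 2 μ →ₗ[ℂ] Lp ℂ 2 μ).IsSymmetric :=
  fun f g ↦ by
    rw [L2.inner_def, L2.inner_def]
    refine integral_congr_ae ?_
    filter_upwards [hφ, (ContinuousLinearMap.mul ℂ ℂ).coeFn_holder (r := 2) φ f,
      (ContinuousLinearMap.mul ℂ ℂ).coeFn_holder (r := 2) φ g] with x hx hf hg
    change ⟪(ContinuousLinearMap.mul ℂ ℂ).holder 2 φ f x, g x⟫_ℂ =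
      ⟪f x, (ContinuousLinearMap.mul ℂ ℂ).holder 2 φ g x⟫_ℂ
    rw [hf, hg, ContinuousLinearMap.mul_apply', ContinuousLinearMap.mul_apply',
      RCLike.inner_apply, RCLike.inner_apply, map_mul, hx]
    ring

lemma exists_isSymmetric_resolvent_eq_cauchyTransform {μ : Measure ℝ} [IsFiniteMeasure μ] {R : ℝ}
    (hR : ∀ᵐ x ∂μ, |x| ≤ R) :
    ∃ A : Lp ℂ 2 μ →ₗ[ℂ] Lp ℂ 2 μ, A.IsSymmetric ∧ ∀ z : ℝ, R < |z| →
      ∃ h, (z : ℂ) • h - A h = Lp.const 2 μ 1 ∧ ⟪h, Lp.const 2 μ 1⟫_ℂ = cauchyTransform μ z := by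
  have hx_mem : MemLp (fun x : ℝ ↦ (x : ℂ)) ∞ μ :=
    memLp_top_of_bound (by fun_prop) R (by simpa using hR)
  let φ : Lp ℂ ∞ μ := hx_mem.toLp _
  have hφ : φ =ᵐ[μ] fun x ↦ (x : ℂ) := hx_mem.coeFn_toLp
  refine ⟨(ContinuousLinearMap.mul ℂ ℂ).holderL μ ∞ 2 2 φ, isSymmetric_holderL_mul ?_,
    fun z hz ↦ ?_⟩
  · filter_upwards [hφ] with x hx
    rw [hx, Complex.conj_ofReal]
  have hh_mem : MemLp (fun x ↦ (((z - x)⁻¹ : ℝ) : ℂ)) 2 μ := (memLp_inv_sub hR hz 2).ofReal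
  let h : Lp ℂ 2 μ := hh_mem.toLp _
  have hh : h =ᵐ[μ] fun x ↦ (((z - x)⁻¹ : ℝ) : ℂ) := hh_mem.coeFn_toLp
  have hξ := Lp.coeFn_const (p := 2) (μ := μ) (c := (1 : ℂ))
  refine ⟨h, Lp.ext ?_, ?_⟩
  · filter_upwards [hφ, hh, hξ, hR, Lp.coeFn_smul (z : ℂ) h, Lp.coeFn_sub ((z : ℂ) • h)
      ((ContinuousLinearMap.mul ℂ ℂ).holder 2 φ h),
      (ContinuousLinearMap.mul ℂ ℂ).coeFn_holder (r := 2) φ h]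
      with x hφx hhx hξx hRx hsmul hsub hmul
    have hzx : z - x ≠ 0 := sub_ne_zero.2 fun hzx ↦ hz.not_ge (hzx ▸ hRx)
    have hzx' : (z - x : ℂ) ≠ 0 := by exact_mod_cast hzx
    refine hsub.trans ?_
    rw [Pi.sub_apply, hsmul, hmul, hξx, Pi.smul_apply, hhx, hφx, smul_eq_mul,
      ContinuousLinearMap.mul_apply']
    push_cast
    field_simp
    rfl
  · rw [L2.inner_def, cauchyTransform, ← integral_complex_ofReal]
    refine integral_congr_ae ?_
    filter_upwards [hh, hξ] with x hhx hξx
    rw [hhx, hξx, RCLike.inner_apply, Complex.conj_ofReal]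
    exact one_mul _

theorem exists_sub_cauchyTransform_mul_cauchyTransform_eq_one {μ : Measure ℝ}
    [IsProbabilityMeasure μ] {R : ℝ} (hR : ∀ᵐ x ∂μ, |x| ≤ R) :
    ∃ (ν : Measure ℝ) (R' : ℝ), IsProbabilityMeasure ν ∧ (∀ᵐ x ∂ν, |x| ≤ R') ∧
      ∫ x, x ∂ν = 0 ∧ ∫ x, x ^ 2 ∂ν = 1 ∧
      ∀ z, R' < |z| → (z - cauchyTransform μ z) * cauchyTransform ν z = 1 := by
  obtain ⟨A, hA, hres⟩ := exists_isSymmetric_resolvent_eq_cauchyTransform hR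
  let ξ : Lp ℂ 2 μ := Lp.const 2 μ 1
  let T : WithLp 2 (ℂ × Lp ℂ 2 μ) →L[ℂ] WithLp 2 (ℂ × Lp ℂ 2 μ) :=
    (isSymmetric_borderedMap hA ξ).toSelfAdjoint
  have hT : IsSelfAdjoint T := (isSymmetric_borderedMap hA ξ).toSelfAdjoint.2
  let e : WithLp 2 (ℂ × Lp ℂ 2 μ) := WithLp.toLp 2 (1, 0)
  have hTe : T e = WithLp.toLp 2 (0, ξ) := (borderedMap_apply A ξ e).trans (by simp [e])
  have he (p : WithLp 2 (ℂ × Lp ℂ 2 μ)) : ⟪e, p⟫_ℂ = p.fst := by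
    simp [WithLp.prod_inner_apply, e]
  have hξ : ⟪ξ, ξ⟫_ℂ = 1 := by
    simp [ξ, inner_self_eq_norm_sq_to_K, Lp.norm_const]
  have hR' := ae_abs_le_spectralMeasure hT e
  refine ⟨spectralMeasure hT e, max R (‖T‖ * ‖(1 : WithLp 2 (ℂ × Lp ℂ 2 μ) →L[ℂ] _)‖),
    isProbabilityMeasure_spectralMeasure hT ?_, hR'.mono fun _ ↦ le_max_of_le_right, ?_, ?_,
    fun z hz ↦ ?_⟩
  · simp [e]
  · rw [integral_id_spectralMeasure, he, hTe]
    rfl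
  · rw [integral_sq_spectralMeasure, he, hTe]
    exact congrArg Complex.re hξ
  · obtain ⟨hzR, hzT⟩ := max_lt_iff.1 hz
    have hz' := mem_resolventSet_of_norm_lt_abs hzT
    obtain ⟨h, hh, hG⟩ := hres z hzR
    have key := sub_inner_mul_fst_eq_one hA hh (smul_resolvent_sub hz' e)
    rw [cauchyTransform_spectralMeasure hT e hz', he]
    rw [hG] at key
    simpa using congrArg Complex.re key

end BorderedOperator

section ReverseStripping

variable {V : ℝ → ℝ} {R : ℝ}

lemma eventually_forall_abs_le_add_mul_sub_pos (hV : ContinuousAt V 0) (hV0 : 0 < V 0) (R : ℝ) :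
    ∀ᶠ m in nhds 0, ∀ x, |x| ≤ R → 0 < V m + m * (m - x) := by
  have hloc (x : ℝ) (_ : x ∈ Set.Icc (-R) R) :
      ∀ᶠ p : ℝ × ℝ in nhds (0, x), 0 < V p.1 + p.1 * (p.1 - p.2) := by
    have hcont : ContinuousAt (fun p : ℝ × ℝ ↦ V p.1 + p.1 * (p.1 - p.2)) (0, x) :=
      (hV.comp_of_eq continuousAt_fst rfl).add (by fun_prop)
    exact hcont.eventually_const_lt (by simpa using hV0)
  simpa only [Set.mem_Icc, ← abs_le] using
    isCompact_Icc.eventually_forall_of_forall_eventually (P := fun m x ↦ 0 < V m + m * (m - x)) hloc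

lemma integral_mul_cskKernel {ν : Measure ℝ} [IsProbabilityMeasure ν] {m : ℝ} (hm : m ≠ 0)
    (hden : ∀ᵐ x ∂ν, V m + m * (m - x) ≠ 0) (hmass : ∫ x, cskKernel V m x ∂ν = 1) :
    ∫ x, x * cskKernel V m x ∂ν = m := by
  have hint : Integrable (cskKernel V m) ν :=
    .of_integral_ne_zero (hmass.trans_ne one_ne_zero)
  calc ∫ x, x * cskKernel V m x ∂ν
      = ∫ x, (cskInverse V m * cskKernel V m x - V m / m) ∂ν := by
        refine integral_congr_ae (hden.mono fun x hx ↦ ?_)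
        rw [add_mul_sub_eq_mul_cskInverse_sub V hm] at hx
        dsimp only
        rw [cskKernel_eq_mul_inv_sub V hm]
        field_simp [right_ne_zero_of_mul hx]
        ring
    _ = cskInverse V m - V m / m := by
        rw [integral_sub (hint.const_mul _) (integrable_const _), integral_const_mul, hmass]
        simp
    _ = m := add_sub_cancel_right m _

lemma ne_dirac_of_integral_eq_zero {ν : Measure ℝ} (hmean : ∫ x, x ∂ν = 0)
    (hvar : ∫ x, x ^ 2 ∂ν = 1) (t : ℝ) : ν ≠ Measure.dirac t := by
  rintro rfl
  rw [integral_dirac] at hmean hvar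
  simp [hmean] at hvar

/- If `K := cskInverse V` inverts the Cauchy transform of `μ`, and `ν` is obtained from `μ` by
`(z - G_μ z) * G_ν z = 1`, then `K m - G_μ (K m) = V m / m`: this is the mass equation of the
kernel for `ν`. -/
theorem memV_of_cauchyTransform {μ : Measure ℝ} [IsProbabilityMeasure μ]
    (hR : ∀ᵐ x ∂μ, |x| ≤ R) (hV : AnalyticAt ℝ V 0) (hV0 : V 0 = 1)
    (hG : ∀ᶠ m in nhdsWithin 0 {0}ᶜ, cauchyTransform μ (cskInverse V m) = m) : memV V := by
  obtain ⟨ν, R', hν, hR', hmean, hvar, hstrip⟩ :=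
    exists_sub_cauchyTransform_mul_cauchyTransform_eq_one hR
  have hV0_pos : 0 < V 0 := hV0 ▸ one_pos
  have hden := eventually_forall_abs_le_add_mul_sub_pos hV.continuousAt hV0_pos R'
  have hpos : ∀ᶠ m in nhds 0, 0 < V m := hV.continuousAt.eventually_const_lt hV0_pos
  obtain ⟨ε, hε, hball⟩ := Metric.eventually_nhds_iff.1
    (hden.and (hpos.and (eventually_nhdsWithin_iff.1 hG)))
  refine ⟨ν, ⟨hν, ⟨R', measure_compl_Icc_eq_zero_iff.2 hR'⟩,
    ne_dirac_of_integral_eq_zero hmean hvar, hmean⟩, hvar, hV, hV0_pos, ε, hε, fun m hm ↦ ?_⟩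
  obtain ⟨hden, hpos, hG⟩ := hball (y := m) (by simpa using hm)
  refine ⟨hR'.mono fun x hx ↦ (div_pos hpos (hden x hx)).le, ?_⟩
  rcases eq_or_ne m 0 with rfl | hm0
  · simp [cskKernel, hV0, hmean]
  have hpole : R' < |cskInverse V m| := by
    by_contra! hle
    have := hden _ hle
    simp [add_mul_sub_eq_mul_cskInverse_sub V hm0] at this
  have hmass : ∫ x, cskKernel V m x ∂ν = 1 := by
    rw [integral_cskKernel V hm0, ← hstrip _ hpole, hG hm0, cskInverse, add_sub_cancel_left]
  exact ⟨hmass, integral_mul_cskKernel hm0 (hR'.mono fun x hx ↦ (hden x hx).ne') hmass⟩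

end ReverseStripping

section PolarCurve

open scoped Real

/-- The curve `θ ↦ r(θ) e^{iθ}` in the complex plane. -/
def polarCurve (r : ℝ → ℝ) (θ : ℝ) : ℂ := r θ * Complex.exp (θ * Complex.I)

variable {r q : ℝ → ℝ}

lemma norm_polarCurve (r : ℝ → ℝ) (θ : ℝ) : ‖polarCurve r θ‖ = |r θ| := by
  rw [polarCurve, norm_mul, Complex.norm_exp_ofReal_mul_I, mul_one, Complex.norm_real,
    Real.norm_eq_abs]

lemma polarCurve_ne_zero {θ : ℝ} (hr : r θ ≠ 0) : polarCurve r θ ≠ 0 := by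
  rwa [← norm_ne_zero_iff, norm_polarCurve, abs_ne_zero]

lemma polarCurve_two_pi (hper : r (2 * π) = r 0) : polarCurve r (2 * π) = polarCurve r 0 := by
  simp [polarCurve, hper, Complex.exp_two_pi_mul_I]

lemma hasDerivAt_polarCurve {θ : ℝ} (hr : HasDerivAt r (r θ * q θ) θ) :
    HasDerivAt (polarCurve r) (polarCurve r θ * (q θ + Complex.I)) θ := by
  refine (hr.ofReal_comp.mul
    ((hasDerivAt_id' θ).ofReal_comp.mul_const Complex.I).cexp).congr_deriv ?_
  rw [polarCurve]
  push_cast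
  ring

lemma continuous_polarCurve (hr : Continuous r) : Continuous (polarCurve r) := by
  unfold polarCurve
  fun_prop

lemma integral_comp_mul_deriv_eq_zero {f : ℂ → ℂ} {γ γ' : ℝ → ℂ} {z : ℂ} {ρ a b : ℝ}
    (hf : DifferentiableOn ℂ f (Metric.ball z ρ)) (hγ : ∀ θ, HasDerivAt γ (γ' θ) θ)
    (hγ' : Continuous γ') (hball : ∀ θ, γ θ ∈ Metric.ball z ρ) (hclosed : γ b = γ a) :
    ∫ θ in a..b, f (γ θ) * γ' θ = 0 := by
  obtain ⟨F, hF⟩ := hf.isExactOn_ball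
  have hγ_cont : Continuous γ := continuous_iff_continuousAt.2 fun θ ↦ (hγ θ).continuousAt
  have hfγ : Continuous fun θ ↦ f (γ θ) := hf.continuousOn.comp_continuous hγ_cont hball
  rw [intervalIntegral.integral_eq_sub_of_hasDerivAt (f := F ∘ γ)
    (fun θ _ ↦ (hF (γ θ) (hball θ)).comp θ (hγ θ)) ((hfγ.mul hγ').intervalIntegrable a b),
    Function.comp_apply, Function.comp_apply, hclosed, sub_self]

lemma hasDerivAt_log_one_sub_div {γ : ℝ → ℂ} {γ' w : ℂ} {θ : ℝ} (hγ : HasDerivAt γ γ' θ)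
    (hw : ‖w‖ < ‖γ θ‖) :
    HasDerivAt (fun t ↦ Complex.log (1 - w / γ t)) (γ' / (γ θ - w) - γ' / γ θ) θ := by
  have hγ_ne : γ θ ≠ 0 := norm_pos_iff.1 ((norm_nonneg w).trans_lt hw)
  have hsub_ne : γ θ - w ≠ 0 := sub_ne_zero.2 fun h ↦ hw.ne' (congrArg norm h)
  have hratio : ‖-(w / γ θ)‖ < 1 := by
    rwa [norm_neg, norm_div, div_lt_one (norm_pos_iff.2 hγ_ne)]
  have hslit : 1 - w / γ θ ∈ Complex.slitPlane :=
    sub_eq_add_neg (1 : ℂ) _ ▸ Complex.mem_slitPlane_of_norm_lt_one hratio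
  refine ((((hasDerivAt_const θ w).div hγ hγ_ne).const_sub 1).clog_real hslit).congr_deriv ?_
  rw [Pi.div_apply, one_sub_div hγ_ne]
  field_simp
  ring

lemma integral_deriv_div_polarCurve_sub (hr : ∀ θ, HasDerivAt r (r θ * q θ) θ) (hq : Continuous q)
    (hper : r (2 * π) = r 0) {w : ℂ} (hw : ∀ θ, ‖w‖ < r θ) :
    ∫ θ in 0..2 * π, polarCurve r θ * (q θ + Complex.I) / (polarCurve r θ - w)
      = 2 * π * Complex.I := by
  have hr_pos (θ : ℝ) : 0 < r θ := (norm_nonneg w).trans_lt (hw θ)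
  have hw' (θ : ℝ) : ‖w‖ < ‖polarCurve r θ‖ := by
    rw [norm_polarCurve, abs_of_pos (hr_pos θ)]
    exact hw θ
  have hsub_ne (θ : ℝ) : polarCurve r θ - w ≠ 0 :=
    sub_ne_zero.2 fun h ↦ (hw' θ).ne' (congrArg norm h)
  let F : ℝ → ℂ := fun θ ↦
    θ * Complex.I + Real.log (r θ) + Complex.log (1 - w / polarCurve r θ)
  have hF (θ : ℝ) :
      HasDerivAt F (polarCurve r θ * (q θ + Complex.I) / (polarCurve r θ - w)) θ := by
    refine ((((hasDerivAt_id' θ).ofReal_comp.mul_const Complex.I).add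
      ((hr θ).log (hr_pos θ).ne').ofReal_comp).add
      (hasDerivAt_log_one_sub_div (hasDerivAt_polarCurve (hr θ)) (hw' θ))).congr_deriv ?_
    rw [mul_div_cancel_left₀ _ (hr_pos θ).ne',
      mul_div_cancel_left₀ _ (polarCurve_ne_zero (hr_pos θ).ne')]
    push_cast
    ring
  have hγ := continuous_polarCurve
    (continuous_iff_continuousAt.2 fun θ ↦ (hr θ).continuousAt)
  rw [intervalIntegral.integral_eq_sub_of_hasDerivAt (fun θ _ ↦ hF θ)
    (Continuous.intervalIntegrable (by fun_prop (disch := assumption)) _ _)]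
  simp [F, polarCurve_two_pi hper, hper]

end PolarCurve

section CubicContourIntegral

open scoped Real

/-- The cofactor of the root `m = w` of `K w - K m`, where `K = cubicInverse a B c`: see
`cubicInverse_sub_cubicInverse`. -/
def cubicCofactor (B c w m : ℂ) : ℂ := 1 - B * m * w - c * m * w * (m + w)

variable {a B c w m : ℂ} {r q : ℝ → ℝ} {ρ : ℝ}

lemma cubicInverse_sub_cubicInverse (hw : w ≠ 0) (hm : m ≠ 0) :
    cubicInverse a B c w - cubicInverse a B c m = (m - w) * cubicCofactor B c w m / (m * w) := by
  rw [cubicInverse, cubicInverse, cubicCofactor]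
  field_simp
  ring

lemma differentiable_cubicCofactor : Differentiable ℂ (cubicCofactor B c w) := by
  unfold cubicCofactor
  fun_prop

lemma eventually_cubicCofactor_ne_zero (B c : ℂ) (ρ : ℝ) :
    ∀ᶠ w in nhds 0, ∀ m, ‖m‖ ≤ ρ → cubicCofactor B c w m ≠ 0 := by
  have hloc (m : ℂ) (_ : m ∈ Metric.closedBall 0 ρ) :
      ∀ᶠ p : ℂ × ℂ in nhds (0, m), cubicCofactor B c p.1 p.2 ≠ 0 := by
    have hcont : Continuous fun p : ℂ × ℂ ↦ cubicCofactor B c p.1 p.2 := by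
      unfold cubicCofactor
      fun_prop
    exact hcont.continuousAt.eventually_ne (by simp [cubicCofactor])
  simpa only [mem_closedBall_zero_iff] using
    (isCompact_closedBall _ _).eventually_forall_of_forall_eventually
      (P := fun w m ↦ cubicCofactor B c w m ≠ 0) hloc

lemma div_cubicInverse_sub_cubicInverse (hw : w ≠ 0) (hm : m ≠ 0) (hmw : m - w ≠ 0)
    (hQ : cubicCofactor B c w m ≠ 0) :
    (B * m ^ 2 + 2 * c * m ^ 3 - 1) / (cubicInverse a B c w - cubicInverse a B c m) =
      w * (m * (B + c * (2 * m + w)) / cubicCofactor B c w m * m - m / (m - w)) := by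
  rw [cubicInverse_sub_cubicInverse hw hm]
  field_simp
  rw [cubicCofactor]
  ring

lemma integral_polarCurve_cubic (hr : ∀ θ, HasDerivAt r (r θ * q θ) θ) (hq : Continuous q)
    (hper : r (2 * π) = r 0) (hr_pos : ∀ θ, 0 < r θ) (hρ : ∀ θ, r θ < ρ) :
    ∫ θ in 0..2 * π, (B * polarCurve r θ ^ 2 + 2 * c * polarCurve r θ ^ 3 - 1) *
      (q θ + Complex.I) = -(2 * π * Complex.I) := by
  have hγ_ne (θ : ℝ) : polarCurve r θ ≠ 0 := polarCurve_ne_zero (hr_pos θ).ne'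
  have hγ := continuous_polarCurve (continuous_iff_continuousAt.2 fun θ ↦ (hr θ).continuousAt)
  have hpole := integral_deriv_div_polarCurve_sub hr hq hper (w := 0) (by simpa using hr_pos)
  have hexact := integral_comp_mul_deriv_eq_zero (f := fun m ↦ B * m + 2 * c * m ^ 2)
    (z := 0) (ρ := ρ) (by fun_prop) (fun θ ↦ hasDerivAt_polarCurve (hr θ)) (by fun_prop)
    (fun θ ↦ by simpa [norm_polarCurve, abs_of_pos (hr_pos θ)] using hρ θ)
    (polarCurve_two_pi hper)
  rw [← zero_sub, ← hexact, ← hpole, ← intervalIntegral.integral_sub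
    (Continuous.intervalIntegrable (by fun_prop) _ _)
    (Continuous.intervalIntegrable (by fun_prop (disch := simpa)) _ _)]
  refine intervalIntegral.integral_congr fun θ _ ↦ ?_
  rw [sub_zero, mul_div_cancel_left₀ _ (hγ_ne θ)]
  ring

lemma integral_polarCurve_cubic_div_sub (hr : ∀ θ, HasDerivAt r (r θ * q θ) θ)
    (hq : Continuous q) (hper : r (2 * π) = r 0) (hρ : ∀ θ, r θ < ρ) (hw0 : w ≠ 0)
    (hw : ∀ θ, ‖w‖ < r θ) (hQ : ∀ m, ‖m‖ ≤ ρ → cubicCofactor B c w m ≠ 0) :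
    ∫ θ in 0..2 * π, (B * polarCurve r θ ^ 2 + 2 * c * polarCurve r θ ^ 3 - 1) *
      (q θ + Complex.I) / (cubicInverse a B c w - cubicInverse a B c (polarCurve r θ))
      = -(2 * π * Complex.I * w) := by
  have hr_pos (θ : ℝ) : 0 < r θ := (norm_nonneg w).trans_lt (hw θ)
  have hγ_ne (θ : ℝ) : polarCurve r θ ≠ 0 := polarCurve_ne_zero (hr_pos θ).ne'
  have hγ_norm (θ : ℝ) : ‖polarCurve r θ‖ = r θ := by rw [norm_polarCurve, abs_of_pos (hr_pos θ)]
  have hsub_ne (θ : ℝ) : polarCurve r θ - w ≠ 0 :=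
    sub_ne_zero.2 fun h ↦ (hw θ).ne' (hγ_norm θ ▸ congrArg norm h)
  have hQγ (θ : ℝ) : cubicCofactor B c w (polarCurve r θ) ≠ 0 :=
    hQ _ ((hγ_norm θ).trans_le (hρ θ).le)
  have hγ := continuous_polarCurve (continuous_iff_continuousAt.2 fun θ ↦ (hr θ).continuousAt)
  have hQ_cont := (differentiable_cubicCofactor (B := B) (c := c) (w := w)).continuous
  have hpole := integral_deriv_div_polarCurve_sub hr hq hper hw
  have hexact := integral_comp_mul_deriv_eq_zero
    (f := fun m ↦ m * (B + c * (2 * m + w)) / cubicCofactor B c w m) (z := 0) (ρ := ρ)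
    (DifferentiableOn.div (by fun_prop) differentiable_cubicCofactor.differentiableOn
      fun m hm ↦ hQ m (mem_ball_zero_iff.1 hm).le)
    (fun θ ↦ hasDerivAt_polarCurve (hr θ)) (by fun_prop)
    (fun θ ↦ by simpa [hγ_norm] using hρ θ) (polarCurve_two_pi hper)
  rw [show -(2 * π * Complex.I * w) = w * (0 - 2 * π * Complex.I) by ring, ← hexact, ← hpole,
    ← intervalIntegral.integral_sub
      (Continuous.intervalIntegrable (by fun_prop (disch := assumption)) _ _)
      (Continuous.intervalIntegrable (by fun_prop (disch := assumption)) _ _),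
    ← intervalIntegral.integral_const_mul]
  refine intervalIntegral.integral_congr fun θ _ ↦ ?_
  rw [mul_div_right_comm,
    div_cubicInverse_sub_cubicInverse hw0 (hγ_ne θ) (hsub_ne θ) (hQγ θ)]
  ring

end CubicContourIntegral

section CubicRadius

open scoped Real

/-- The polar radius `r` of the curve on which `m ↦ m⁻¹ + a + B m + c m²` is real, that is, of
`B r² + 2 c r³ cos θ = 1`. Its inverse is the largest root of `u³ = B u + 2 c cos θ`, in Viète's
trigonometric form. -/
def cubicRadius (B c θ : ℝ) : ℝ :=
  (2 * √(B / 3) * Real.cos (Real.arccos (c / √(B / 3) ^ 3 * Real.cos θ) / 3))⁻¹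

variable {B c : ℝ}

lemma sqrt_div_three_pos (hc : 27 * c ^ 2 < B ^ 3) : 0 < √(B / 3) := by
  have hB : 0 < B := (Odd.pow_pos_iff (by decide)).1 ((by positivity : 0 ≤ 27 * c ^ 2).trans_lt hc)
  positivity

lemma three_mul_sq_sqrt_div_three (hc : 27 * c ^ 2 < B ^ 3) : 3 * √(B / 3) ^ 2 = B := by
  rw [Real.sq_sqrt (Real.sqrt_pos.1 (sqrt_div_three_pos hc)).le]
  ring

lemma abs_mul_cos_lt_one (hc : 27 * c ^ 2 < B ^ 3) (θ : ℝ) :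
    |c / √(B / 3) ^ 3 * Real.cos θ| < 1 := by
  have hl := sqrt_div_three_pos hc
  have hsq : c ^ 2 < (√(B / 3) ^ 3) ^ 2 := by
    rw [← three_mul_sq_sqrt_div_three hc] at hc
    linarith
  have hratio : |c / √(B / 3) ^ 3| < 1 := by
    rw [abs_div, div_lt_one (by positivity)]
    exact sq_lt_sq.1 hsq
  rw [abs_mul]
  exact mul_lt_one_of_nonneg_of_lt_one_left (abs_nonneg _) hratio (Real.abs_cos_le_one θ)

lemma half_lt_cos_arccos_div_three {x : ℝ} (hx : -1 < x) :
    1 / 2 < Real.cos (Real.arccos x / 3) := by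
  have hlt : Real.arccos x < π := (Real.arccos_le_pi x).lt_of_ne (by simpa using hx)
  rw [← Real.cos_pi_div_three]
  exact Real.cos_lt_cos_of_nonneg_of_le_pi (by linarith [Real.arccos_nonneg x])
    (by linarith [Real.pi_pos]) (by linarith)

lemma sqrt_lt_inv_cubicRadius (hc : 27 * c ^ 2 < B ^ 3) (θ : ℝ) :
    √(B / 3) < (cubicRadius B c θ)⁻¹ := by
  have hcos := half_lt_cos_arccos_div_three (abs_lt.1 (abs_mul_cos_lt_one hc θ)).1
  rw [cubicRadius, inv_inv]
  nlinarith [sqrt_div_three_pos hc]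

lemma cubicRadius_pos (hc : 27 * c ^ 2 < B ^ 3) (θ : ℝ) : 0 < cubicRadius B c θ :=
  inv_pos.1 ((sqrt_div_three_pos hc).trans (sqrt_lt_inv_cubicRadius hc θ))

lemma cubicRadius_lt (hc : 27 * c ^ 2 < B ^ 3) (θ : ℝ) : cubicRadius B c θ < (√(B / 3))⁻¹ :=
  (lt_inv_comm₀ (sqrt_div_three_pos hc) (cubicRadius_pos hc θ)).1 (sqrt_lt_inv_cubicRadius hc θ)

lemma le_cubicRadius (hc : 27 * c ^ 2 < B ^ 3) (θ : ℝ) :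
    (2 * √(B / 3))⁻¹ ≤ cubicRadius B c θ := by
  refine (inv_le_comm₀ (cubicRadius_pos hc θ) (by linarith [sqrt_div_three_pos hc])).1 ?_
  rw [cubicRadius, inv_inv]
  exact mul_le_of_le_one_right (by positivity) (Real.cos_le_one _)

lemma mul_cubicRadius_sq_lt (hc : 27 * c ^ 2 < B ^ 3) (θ : ℝ) : B * cubicRadius B c θ ^ 2 < 3 := by
  have hlt : √(B / 3) * cubicRadius B c θ < 1 :=
    (lt_inv_mul_iff₀ (sqrt_div_three_pos hc)).1 (by simpa using cubicRadius_lt hc θ)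
  have hnonneg := mul_pos (sqrt_div_three_pos hc) (cubicRadius_pos hc θ)
  calc B * cubicRadius B c θ ^ 2 = 3 * (√(B / 3) * cubicRadius B c θ) ^ 2 := by
        rw [mul_pow, ← mul_assoc, three_mul_sq_sqrt_div_three hc]
    _ < 3 := by nlinarith

lemma cubicRadius_locus (hc : 27 * c ^ 2 < B ^ 3) (θ : ℝ) :
    B * cubicRadius B c θ ^ 2 + 2 * c * cubicRadius B c θ ^ 3 * Real.cos θ = 1 := by
  set φ := Real.arccos (c / √(B / 3) ^ 3 * Real.cos θ) with hφ
  have hl := sqrt_div_three_pos hc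
  have htriple :
      c / √(B / 3) ^ 3 * Real.cos θ = 4 * Real.cos (φ / 3) ^ 3 - 3 * Real.cos (φ / 3) := by
    have habs := abs_lt.1 (abs_mul_cos_lt_one hc θ)
    rw [← Real.cos_three_mul, mul_div_cancel₀ _ three_ne_zero, hφ,
      Real.cos_arccos habs.1.le habs.2.le]
  have hroot : (cubicRadius B c θ)⁻¹ ^ 3 = B * (cubicRadius B c θ)⁻¹ + 2 * c * Real.cos θ := by
    rw [cubicRadius, inv_inv, ← hφ]
    field_simp at htriple
    linear_combination (-2) * htriple +
      2 * √(B / 3) * Real.cos (φ / 3) * three_mul_sq_sqrt_div_three hc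
  have hr := (cubicRadius_pos hc θ).ne'
  field_simp at hroot
  linear_combination -hroot

lemma cubicRadius_two_pi : cubicRadius B c (2 * π) = cubicRadius B c 0 := by
  rw [cubicRadius, cubicRadius, Real.cos_two_pi, Real.cos_zero]

lemma differentiable_cubicRadius (hc : 27 * c ^ 2 < B ^ 3) :
    Differentiable ℝ (cubicRadius B c) := by
  intro θ
  have habs := abs_lt.1 (abs_mul_cos_lt_one hc θ)
  have harccos : DifferentiableAt ℝ (fun t ↦ Real.arccos (c / √(B / 3) ^ 3 * Real.cos t)) θ :=
    (Real.differentiableAt_arccos.2 ⟨habs.1.ne', habs.2.ne⟩).comp θ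
      (f := fun t ↦ c / √(B / 3) ^ 3 * Real.cos t) (by fun_prop)
  exact ((harccos.div_const 3).cos.const_mul _).inv (inv_eq_zero.not.1 (cubicRadius_pos hc θ).ne')

/-- The logarithmic derivative of `cubicRadius`. -/
def cubicRadiusLogDeriv (B c θ : ℝ) : ℝ :=
  2 * c * cubicRadius B c θ ^ 3 * Real.sin θ / (3 - B * cubicRadius B c θ ^ 2)

lemma mul_cubicRadiusLogDeriv (hc : 27 * c ^ 2 < B ^ 3) (θ : ℝ) :
    (3 - B * cubicRadius B c θ ^ 2) * cubicRadiusLogDeriv B c θ =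
      2 * c * cubicRadius B c θ ^ 3 * Real.sin θ :=
  mul_div_cancel₀ _ (sub_pos.2 (mul_cubicRadius_sq_lt hc θ)).ne'

lemma hasDerivAt_cubicRadius (hc : 27 * c ^ 2 < B ^ 3) (θ : ℝ) :
    HasDerivAt (cubicRadius B c) (cubicRadius B c θ * cubicRadiusLogDeriv B c θ) θ := by
  have hr := (differentiable_cubicRadius hc θ).hasDerivAt
  have hlocus := ((hr.pow 2).const_mul B).add
    (((hr.pow 3).const_mul (2 * c)).mul (Real.hasDerivAt_cos θ))
  have hconst : HasDerivAt (fun _ : ℝ ↦ (1 : ℝ)) 0 θ := hasDerivAt_const θ 1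
  have hzero := hlocus.unique (hconst.congr_of_eventuallyEq (.of_forall (cubicRadius_locus hc)))
  refine hr.congr_deriv (mul_left_cancel₀ (sub_pos.2 (mul_cubicRadius_sq_lt hc θ)).ne' ?_)
  simp only [Pi.pow_apply, Nat.cast_ofNat] at hzero
  linear_combination cubicRadius B c θ * hzero - 3 * deriv (cubicRadius B c) θ *
    cubicRadius_locus hc θ - cubicRadius B c θ * mul_cubicRadiusLogDeriv hc θ

lemma continuous_cubicRadiusLogDeriv (hc : 27 * c ^ 2 < B ^ 3) :
    Continuous (cubicRadiusLogDeriv B c) := by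
  have hr := (differentiable_cubicRadius hc).continuous
  exact Continuous.div (by fun_prop) (by fun_prop)
    fun θ ↦ (sub_pos.2 (mul_cubicRadius_sq_lt hc θ)).ne'

end CubicRadius

section WeightedPushforward

variable {a b : ℝ} {w x : ℝ → ℝ}

/-- The image under `x` of the measure on `(a, b]` with density `w`. -/
def weightedPushforward (a b : ℝ) (w x : ℝ → ℝ) : Measure ℝ :=
  ((volume.restrict (Set.Ioc a b)).withDensity fun t ↦ ENNReal.ofReal (w t)).map x

lemma integral_weightedPushforward (hab : a ≤ b) (hw : Measurable w) (hw0 : ∀ t, 0 ≤ w t)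
    (hx : Measurable x) {f : ℝ → ℝ} (hf : Measurable f) :
    ∫ y, f y ∂weightedPushforward a b w x = ∫ t in a..b, w t * f (x t) := by
  rw [weightedPushforward, integral_map hx.aemeasurable hf.aestronglyMeasurable,
    integral_withDensity_eq_integral_toReal_smul (by fun_prop) (by simp),
    intervalIntegral.integral_of_le hab]
  simp only [ENNReal.toReal_ofReal (hw0 _), smul_eq_mul]

lemma isProbabilityMeasure_weightedPushforward (hab : a ≤ b) (hw0 : ∀ t, 0 ≤ w t)
    (hx : Measurable x) (hmass : ∫ t in a..b, w t = 1) :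
    IsProbabilityMeasure (weightedPushforward a b w x) := by
  rw [intervalIntegral.integral_of_le hab] at hmass
  refine Measure.isProbabilityMeasure_map_iff hx.aemeasurable |>.2 ⟨?_⟩
  rw [withDensity_apply _ MeasurableSet.univ, Measure.restrict_univ,
    ← ofReal_integral_eq_lintegral_ofReal (.of_integral_ne_zero (hmass.trans_ne one_ne_zero))
      (.of_forall hw0), hmass, ENNReal.ofReal_one]

lemma exists_ae_abs_le_weightedPushforward (hx : Continuous x) :
    ∃ R, ∀ᵐ y ∂weightedPushforward a b w x, |y| ≤ R := by
  obtain ⟨R, hR⟩ := (isCompact_Icc (a := a) (b := b)).exists_bound_of_continuousOn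
    hx.continuousOn
  refine ⟨R, (ae_map_iff hx.aemeasurable (measurableSet_le measurable_abs measurable_const)).2 ?_⟩
  refine (withDensity_absolutelyContinuous _ _).ae_le ?_
  filter_upwards [ae_restrict_mem measurableSet_Ioc] with t ht
  exact hR t (Set.Ioc_subset_Icc_self ht)

end WeightedPushforward

section CubicMeasure

open scoped Real

variable {B c : ℝ}

lemma im_cubicInverse_polarCurve (a : ℝ) {r : ℝ → ℝ} {θ : ℝ} (hr : r θ ≠ 0)
    (hlocus : B * r θ ^ 2 + 2 * c * r θ ^ 3 * Real.cos θ = 1) :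
    (cubicInverse (a : ℂ) B c (polarCurve r θ)).im = 0 := by
  have hinv : (polarCurve r θ)⁻¹ = ((r θ)⁻¹ : ℝ) * Complex.exp ((-θ : ℝ) * Complex.I) := by
    rw [polarCurve, mul_inv, ← Complex.exp_neg, Complex.ofReal_inv, Complex.ofReal_neg, neg_mul]
  have hsq : polarCurve r θ ^ 2 = (r θ ^ 2 : ℝ) * Complex.exp ((2 * θ : ℝ) * Complex.I) := by
    rw [polarCurve, mul_pow, ← Complex.exp_nat_mul]
    push_cast
    ring_nf
  have him : (cubicInverse (a : ℂ) B c (polarCurve r θ)).im =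
      -((r θ)⁻¹ * Real.sin θ) + B * (r θ * Real.sin θ) + c * (r θ ^ 2 * Real.sin (2 * θ)) := by
    simp only [cubicInverse, hinv, hsq]
    simp only [polarCurve, Complex.add_im, Complex.im_ofReal_mul, Complex.exp_ofReal_mul_I_im,
      Complex.ofReal_im, Real.sin_neg]
    ring
  rw [him, Real.sin_two_mul]
  field_simp
  linear_combination Real.sin θ * hlocus

lemma cubic_polarCurve_sub_one {r : ℝ → ℝ} {θ : ℝ}
    (hlocus : B * r θ ^ 2 + 2 * c * r θ ^ 3 * Real.cos θ = 1) :
    B * polarCurve r θ ^ 2 + 2 * c * polarCurve r θ ^ 3 - 1 =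
      Complex.exp (θ * Complex.I) * Real.sin θ *
        ((3 - B * r θ ^ 2 : ℝ) * Complex.I - (2 * c * r θ ^ 3 * Real.sin θ : ℝ)) := by
  have hsq : (Real.cos θ : ℂ) ^ 2 + (Real.sin θ : ℂ) ^ 2 = 1 := by
    exact_mod_cast Real.cos_sq_add_sin_sq θ
  have hlocus' : (B * r θ ^ 2 + 2 * c * r θ ^ 3 * Real.cos θ : ℂ) = 1 := by exact_mod_cast hlocus
  have hI := Complex.I_sq
  rw [polarCurve, Complex.exp_mul_I, ← Complex.ofReal_cos, ← Complex.ofReal_sin]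
  push_cast [-Complex.ofReal_cos, -Complex.ofReal_sin]
  generalize (Real.cos θ : ℂ) = C at *
  generalize (Real.sin θ : ℂ) = S at *
  grind

/-- The real point `K(r e^{iθ})`, where `K = cubicInverse a B c` and `r = cubicRadius B c`. -/
def cubicAbscissa (a B c θ : ℝ) : ℝ :=
  (cubicInverse (a : ℂ) B c (polarCurve (cubicRadius B c) θ)).re

/-- The density `-(2π)⁻¹ Im (γ K'(γ) γ')` of the curve `γ = r e^{iθ}`, where `r = cubicRadius B c`
and `K = cubicInverse a B c`. This is Stieltjes inversion: `γ` runs through the boundary values of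
the Cauchy transform whose inverse is `K`. -/
def cubicDensity (B c θ : ℝ) : ℝ :=
  -((B * polarCurve (cubicRadius B c) θ ^ 2 + 2 * c * polarCurve (cubicRadius B c) θ ^ 3 - 1) *
    (cubicRadiusLogDeriv B c θ + Complex.I)).im / (2 * π)

lemma ofReal_cubicAbscissa (a : ℝ) (hc : 27 * c ^ 2 < B ^ 3) (θ : ℝ) :
    (cubicAbscissa a B c θ : ℂ) = cubicInverse (a : ℂ) B c (polarCurve (cubicRadius B c) θ) :=
  Complex.ext rfl (im_cubicInverse_polarCurve a (cubicRadius_pos hc θ).ne'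
    (cubicRadius_locus hc θ)).symm

lemma continuous_polarCurve_cubicRadius (hc : 27 * c ^ 2 < B ^ 3) :
    Continuous (polarCurve (cubicRadius B c)) :=
  continuous_polarCurve (differentiable_cubicRadius hc).continuous

lemma continuous_cubicAbscissa (a : ℝ) (hc : 27 * c ^ 2 < B ^ 3) :
    Continuous (cubicAbscissa a B c) :=
  Complex.continuous_re.comp <| continuous_iff_continuousAt.2 fun θ ↦
    (analyticAt_cubicInverse (polarCurve_ne_zero (cubicRadius_pos hc θ).ne')).continuousAt.comp
      (continuous_polarCurve_cubicRadius hc).continuousAt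

lemma continuous_cubicDensity (hc : 27 * c ^ 2 < B ^ 3) : Continuous (cubicDensity B c) := by
  have hγ := continuous_polarCurve_cubicRadius hc
  have hq := continuous_cubicRadiusLogDeriv hc
  unfold cubicDensity
  fun_prop

lemma cubicDensity_nonneg (hc : 27 * c ^ 2 < B ^ 3) (θ : ℝ) : 0 ≤ cubicDensity B c θ := by
  set q := cubicRadiusLogDeriv B c θ
  set D := 3 - B * cubicRadius B c θ ^ 2
  have hD : 0 < D := sub_pos.2 (mul_cubicRadius_sq_lt hc θ)
  have him : ((B * polarCurve (cubicRadius B c) θ ^ 2 + 2 * c * polarCurve (cubicRadius B c) θ ^ 3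
      - 1) * (q + Complex.I)).im = -(Real.sin θ ^ 2 * D * (1 + q ^ 2)) := by
    have hfactor : Complex.exp (θ * Complex.I) * Real.sin θ *
        (D * Complex.I - (D * q : ℝ)) * (q + Complex.I) =
          (-(Real.sin θ * D * (1 + q ^ 2)) : ℝ) * Complex.exp (θ * Complex.I) := by
      push_cast
      linear_combination Complex.exp (θ * Complex.I) * Complex.sin θ * D * Complex.I_sq
    rw [cubic_polarCurve_sub_one (cubicRadius_locus hc θ), ← mul_cubicRadiusLogDeriv hc, hfactor,
      Complex.im_ofReal_mul, Complex.exp_ofReal_mul_I_im]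
    ring
  rw [cubicDensity, him, neg_neg]
  positivity

lemma integral_cubicDensity (hc : 27 * c ^ 2 < B ^ 3) :
    ∫ θ in 0..2 * π, cubicDensity B c θ = 1 := by
  have hcontour := integral_polarCurve_cubic (B := B) (c := c) (hasDerivAt_cubicRadius hc)
    (continuous_cubicRadiusLogDeriv hc) cubicRadius_two_pi (cubicRadius_pos hc) (cubicRadius_lt hc)
  have hint := intervalIntegral.intervalIntegrable_of_integral_ne_zero
    (hcontour.trans_ne (by simp [Real.pi_ne_zero]))
  have him := (intervalIntegral.intervalIntegral_im hint).trans (congrArg RCLike.im hcontour)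
  simp only [RCLike.im_to_complex] at him
  simp only [cubicDensity, intervalIntegral.integral_div, intervalIntegral.integral_neg, him]
  simp [Real.pi_ne_zero]

lemma integral_cubicDensity_mul_inv_sub (a : ℝ) (hc : 27 * c ^ 2 < B ^ 3) {w : ℝ} (hw0 : w ≠ 0)
    (hw : ∀ θ, |w| < cubicRadius B c θ)
    (hQ : ∀ m, ‖m‖ ≤ (√(B / 3))⁻¹ → cubicCofactor B c w m ≠ 0) :
    ∫ θ in 0..2 * π, cubicDensity B c θ * (cubicInverse a B c w - cubicAbscissa a B c θ)⁻¹ = w := by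
  have hcontour := integral_polarCurve_cubic_div_sub (a := a) (hasDerivAt_cubicRadius hc)
    (continuous_cubicRadiusLogDeriv hc) cubicRadius_two_pi (cubicRadius_lt hc)
    (Complex.ofReal_ne_zero.2 hw0) (by simpa using hw) hQ
  have hint := intervalIntegral.intervalIntegrable_of_integral_ne_zero
    (hcontour.trans_ne (by simp [Real.pi_ne_zero, hw0]))
  have him := (intervalIntegral.intervalIntegral_im hint).trans (congrArg RCLike.im hcontour)
  have hpole (θ : ℝ) : cubicInverse (a : ℂ) B c w -
      cubicInverse (a : ℂ) B c (polarCurve (cubicRadius B c) θ) =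
        ((cubicInverse a B c w - cubicAbscissa a B c θ : ℝ) : ℂ) := by
    rw [← ofReal_cubicAbscissa a hc, cubicInverse, cubicInverse]
    push_cast
    rfl
  simp only [RCLike.im_to_complex, hpole, Complex.div_ofReal_im] at him
  calc ∫ θ in 0..2 * π, cubicDensity B c θ * (cubicInverse a B c w - cubicAbscissa a B c θ)⁻¹
      = -(-(2 * π * Complex.I * w)).im / (2 * π) := by
        rw [← him, ← intervalIntegral.integral_neg, ← intervalIntegral.integral_div]
        refine intervalIntegral.integral_congr fun θ _ ↦ ?_
        rw [cubicDensity]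
        ring
    _ = w := by
        simp

theorem exists_cauchyTransform_cubicInverse_eq (a : ℝ) (hc : 27 * c ^ 2 < B ^ 3) :
    ∃ (μ : Measure ℝ) (R : ℝ), IsProbabilityMeasure μ ∧ (∀ᵐ x ∂μ, |x| ≤ R) ∧
      ∀ᶠ m in nhdsWithin 0 {0}ᶜ, cauchyTransform μ (cubicInverse a B c m) = m := by
  have hx := continuous_cubicAbscissa a hc
  have hnonneg := cubicDensity_nonneg hc
  obtain ⟨R, hR⟩ := exists_ae_abs_le_weightedPushforward (a := 0) (b := 2 * π)
    (w := cubicDensity B c) hx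
  refine ⟨_, R, isProbabilityMeasure_weightedPushforward Real.two_pi_pos.le hnonneg hx.measurable
    (integral_cubicDensity hc), hR, ?_⟩
  have hsmall : ∀ᶠ w : ℝ in nhds 0, |w| < (2 * √(B / 3))⁻¹ :=
    continuous_abs.continuousAt.eventually_lt_const (by
      rw [abs_zero, inv_pos]
      exact mul_pos two_pos (sqrt_div_three_pos hc))
  have hcofactor : ∀ᶠ w : ℝ in nhds 0, ∀ m : ℂ, ‖m‖ ≤ (√(B / 3))⁻¹ → cubicCofactor B c w m ≠ 0 :=
    (Complex.continuous_ofReal.tendsto' 0 0 Complex.ofReal_zero).eventually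
      (eventually_cubicCofactor_ne_zero B c _)
  filter_upwards [self_mem_nhdsWithin, hsmall.filter_mono nhdsWithin_le_nhds,
    hcofactor.filter_mono nhdsWithin_le_nhds] with w hw0 hw hQ
  rw [cauchyTransform, integral_weightedPushforward Real.two_pi_pos.le
    (continuous_cubicDensity hc).measurable hnonneg hx.measurable (by fun_prop)]
  exact integral_cubicDensity_mul_inv_sub a hc hw0 (fun θ ↦ hw.trans_le (le_cubicRadius hc θ)) hQ

end CubicMeasure

theorem memV_cubicVariance {a b c : ℝ} (hc : 27 * c ^ 2 < (b + 1) ^ 3) :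
    memV (cubicVariance a b c) := by
  obtain ⟨μ, R, hμ, hR, hG⟩ := exists_cauchyTransform_cubicInverse_eq a hc
  refine memV_of_cauchyTransform hR ?_ (by simp [cubicVariance]) ?_
  · unfold cubicVariance
    fun_prop
  · filter_upwards [hG, self_mem_nhdsWithin] with m hm hm0
    rwa [cskInverse_cubicVariance hm0]

lemma memVinf_cubicVariance_iff {a b c : ℝ} :
    memVinf (cubicVariance a b c) ↔
      ∀ s, memV (cubicVariance (a * s) (b * s ^ 2) (c * s ^ 3)) := by
  refine forall_congr' fun s ↦ ?_
  have hscale : (fun m ↦ cubicVariance a b c (s * m)) =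
      cubicVariance (a * s) (b * s ^ 2) (c * s ^ 3) := by
    funext m
    simp only [cubicVariance]
    ring
  rw [hscale]

lemma exists_mul_sq_add_one_pow_three_lt {b c : ℝ} (h : b ^ 3 < 27 * c ^ 2) :
    ∃ s, 0 ≤ c * s ^ 3 ∧ (b * s ^ 2 + 1) ^ 3 < 27 * (c * s ^ 3) ^ 2 := by
  have hnear : ∀ᶠ t in nhdsWithin 0 (Set.Ioi 0), (b + t ^ 2) ^ 3 < 27 * c ^ 2 :=
    ((Continuous.continuousAt (by fun_prop)).eventually_lt_const (by simpa using h)).filter_mono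
      nhdsWithin_le_nhds
  obtain ⟨t, ht, ht0⟩ := (hnear.and self_mem_nhdsWithin).exists
  have hscaled {s : ℝ} (hs : s ^ 2 * t ^ 2 = 1) :
      (b * s ^ 2 + 1) ^ 3 < 27 * (c * s ^ 3) ^ 2 := by
    have hs0 : 0 < (s ^ 2) ^ 3 := pow_pos (pos_of_mul_pos_left (hs ▸ one_pos) (sq_nonneg t)) 3
    calc (b * s ^ 2 + 1) ^ 3 = (b + t ^ 2) ^ 3 * (s ^ 2) ^ 3 := by rw [← hs]; ring
      _ < 27 * c ^ 2 * (s ^ 2) ^ 3 := mul_lt_mul_of_pos_right ht hs0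
      _ = 27 * (c * s ^ 3) ^ 2 := by ring
  have : 0 < t := ht0
  rcases le_total 0 c with hc | hc
  · exact ⟨t⁻¹, by positivity, hscaled (by field_simp)⟩
  · refine ⟨-t⁻¹, mul_nonneg_of_nonpos_of_nonpos hc ?_, hscaled (by field_simp)⟩
    rw [Odd.neg_pow (by decide)]
    exact neg_nonpos.2 (by positivity)

lemma lt_mul_sq_add_one_pow_three {b c : ℝ} (h : 27 * c ^ 2 ≤ b ^ 3) (s : ℝ) :
    27 * (c * s ^ 3) ^ 2 < (b * s ^ 2 + 1) ^ 3 := by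
  calc 27 * (c * s ^ 3) ^ 2 = 27 * c ^ 2 * (s ^ 2) ^ 3 := by ring
    _ ≤ b ^ 3 * (s ^ 2) ^ 3 := mul_le_mul_of_nonneg_right h (by positivity)
    _ = (b * s ^ 2) ^ 3 := (mul_pow ..).symm
    _ < (b * s ^ 2 + 1) ^ 3 := Odd.strictMono_pow (by decide) (lt_add_one _)

/-- A cubic function `V(m) = 1 + a·m + b·m² + c·m³` is in `𝒱∞` iff `b³ ≥ 27c²`. -/
theorem cubic_in_Vinf_iff (a b c : ℝ) :
    memVinf (fun m => 1 + a * m + b * m ^ 2 + c * m ^ 3) ↔ b ^ 3 ≥ 27 * c ^ 2 := by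
  refine memVinf_cubicVariance_iff.trans ⟨fun hmem ↦ ?_, fun h s ↦ ?_⟩
  · by_contra! hlt
    obtain ⟨s, hcs, hs⟩ := exists_mul_sq_add_one_pow_three_lt hlt
    exact not_memV_cubicVariance hcs hs (hmem s)
  · exact memV_cubicVariance (lt_mul_sq_add_one_pow_three h s)
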